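/- The 4×4 integer matrix A_{3,I} = [[2,-2,-5,-1],[-2,2,-1,-5],[-5,-1,2,-2],[-1,-5,-2,2]] satisfies: (a) it is a symmetric generalized Cartan matrix (symmetric, all diagonal entries 2, all off-diagonal entries nonpositive); (b) it has rank 3 over ℚ; (c) the real quadratic form x ↦ xᵀAx on ℝ⁴ is equivalent to the weighted sum of squares with weights (1,1,−1,0), i.e. A is hyperbolic of rank 3; (d) there exists c ∈ ℚ⁴ with Ac = −(1,1,1,1)ᵀ and cᵀAc < 0 (a lattice Weyl vector of negative square). -/

import Mathlib

open Matrix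

/-! `A_{3,I}` is a group matrix of the Klein four-group: identifying `0, 1, 2, 3` with the elements
of `(ℤ/2)²`, the entry at `(i, j)` depends only on `i + j`. The four characters are therefore
orthogonal eigenvectors, with eigenvalues `6, 8, -6, 0`. These give the rank and the signature, and
the trivial character, having eigenvalue `-6`, gives the Weyl vector `(1/6, 1/6, 1/6, 1/6)`. -/

section Congruence

variable {n : Type*} [Fintype n] [DecidableEq n]

lemma rank_eq_card_of_congr_diagonal {K : Type*} [Field K] [DecidableEq K] {A P : Matrix n n K}
    {d : n → K} (hP : IsUnit P.det) (h : Pᵀ * A * P = diagonal d) :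
    A.rank = Fintype.card {i // d i ≠ 0} := by
  have hPt : IsUnit Pᵀ.det := by rwa [det_transpose]
  rw [← rank_diagonal, ← h, rank_mul_eq_left_of_isUnit_det P _ hP,
    rank_mul_eq_right_of_isUnit_det Pᵀ _ hPt]

lemma exists_ne_zero_mul_mul_self_eq_sign (x : ℝ) :
    ∃ e : ℝ, e ≠ 0 ∧ e * x * e = SignType.sign x := by
  rcases eq_or_ne x 0 with rfl | hx
  · exact ⟨1, one_ne_zero, by simp⟩
  · have hsqrt : √|x| ≠ 0 := Real.sqrt_ne_zero'.2 (abs_pos.2 hx)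
    refine ⟨(√|x|)⁻¹, inv_ne_zero hsqrt, ?_⟩
    calc (√|x|)⁻¹ * x * (√|x|)⁻¹ = x / (√|x| * √|x|) := by field_simp
      _ = SignType.sign x * |x| / |x| := by
        rw [Real.mul_self_sqrt (abs_nonneg x), sign_mul_abs]
      _ = SignType.sign x := mul_div_cancel_right₀ _ (abs_ne_zero.2 hx)

lemma exists_congr_diagonal_sign_of_congr_diagonal {A P : Matrix n n ℝ} {d : n → ℝ}
    (hP : IsUnit P.det) (h : Pᵀ * A * P = diagonal d) :
    ∃ Q : Matrix n n ℝ, IsUnit Q.det ∧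
      Qᵀ * A * Q = diagonal fun i => (SignType.sign (d i) : ℝ) := by
  choose e he hed using fun i => exists_ne_zero_mul_mul_self_eq_sign (d i)
  refine ⟨P * diagonal e, ?_, ?_⟩
  · rw [det_mul, det_diagonal]
    exact hP.mul (Finset.prod_ne_zero_iff.2 fun i _ => he i).isUnit
  · calc (P * diagonal e)ᵀ * A * (P * diagonal e)
        = diagonal e * (Pᵀ * A * P) * diagonal e := by
          simp only [transpose_mul, diagonal_transpose, Matrix.mul_assoc]
      _ = diagonal fun i => (SignType.sign (d i) : ℝ) := by
          simp only [h, diagonal_mul_diagonal, hed]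

end Congruence

lemma exists_mulVec_eq_neg_one_and_dotProduct_neg {n K : Type*} [Fintype n] [Nonempty n] [Field K]
    [LinearOrder K] [IsStrictOrderedRing K] {A : Matrix n n K} {s : K} (hs : s < 0)
    (hA : A *ᵥ 1 = s • 1) :
    ∃ c : n → K, (∀ i, (A *ᵥ c) i = -1) ∧ c ⬝ᵥ A *ᵥ c < 0 := by
  have hAc : A *ᵥ (-s⁻¹ • 1) = -1 := by
    rw [mulVec_smul, hA, smul_smul, neg_mul, inv_mul_cancel₀ hs.ne, neg_one_smul]
  refine ⟨-s⁻¹ • 1, fun i => congrFun hAc i, ?_⟩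
  have hcard : (0 : K) < Fintype.card n := Nat.cast_pos.2 Fintype.card_pos
  calc (-s⁻¹ • 1) ⬝ᵥ A *ᵥ (-s⁻¹ • 1) = s⁻¹ * Fintype.card n := by
        simp only [hAc, smul_dotProduct, dotProduct_neg, one_dotProduct_one, smul_eq_mul,
          neg_mul, neg_neg]
    _ < 0 := mul_neg_of_neg_of_pos (inv_lt_zero.2 hs) hcard

section KleinFour

variable {R S : Type*}

/-- The group matrix of the Klein four-group with first row `(a, b, c, d)`: with the indices
`0, 1, 2, 3` read as two-bit numbers, the entry at `(i, j)` is the entry of the first row at the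
bitwise sum of `i` and `j`. -/
def kleinFourMatrix (a b c d : R) : Matrix (Fin 4) (Fin 4) R :=
  !![a, b, c, d;
    b, a, d, c;
    c, d, a, b;
    d, c, b, a]

lemma kleinFourMatrix_map (f : R → S) (a b c d : R) :
    (kleinFourMatrix a b c d).map f = kleinFourMatrix (f a) (f b) (f c) (f d) := by
  ext i j
  fin_cases i <;> fin_cases j <;> rfl

lemma kleinFourMatrix_apply_le_of_ne [LE R] {a b c d x : R} (hb : b ≤ x) (hc : c ≤ x)
    (hd : d ≤ x) {i j : Fin 4} (hij : i ≠ j) : kleinFourMatrix a b c d i j ≤ x := by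
  fin_cases i <;> fin_cases j <;> first | exact absurd rfl hij | assumption

lemma kleinFourMatrix_mulVec_one [Semiring R] (a b c d : R) :
    kleinFourMatrix a b c d *ᵥ 1 = (a + b + c + d) • 1 := by
  ext i
  fin_cases i <;> simp [kleinFourMatrix, mulVec, dotProduct, Fin.sum_univ_four] <;> abel

variable [Ring R]

variable (R) in
/-- The matrix whose columns are the four characters of the Klein four-group, the common
eigenvectors of all `kleinFourMatrix a b c d`. They are ordered so that the eigenvalues of
`A_{3,I}` have signs `1, 1, -1, 0`; the trivial character is the third column. -/
def kleinFourCharTable : Matrix (Fin 4) (Fin 4) R :=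
  !![1, 1, 1, 1;
    1, -1, 1, -1;
    -1, -1, 1, 1;
    -1, 1, 1, -1]

/-- The eigenvalues of `kleinFourMatrix a b c d`, in the order of the columns of
`kleinFourCharTable`. -/
def kleinFourEigenvalues (a b c d : R) : Fin 4 → R :=
  ![a + b - c - d, a - b - c + d, a + b + c + d, a - b + c - d]

lemma kleinFourCharTable_transpose_mul_self :
    (kleinFourCharTable R)ᵀ * kleinFourCharTable R = diagonal fun _ => 4 := by
  ext i j
  fin_cases i <;> fin_cases j <;>
    simp [kleinFourCharTable, Matrix.mul_apply, Fin.sum_univ_four] <;> norm_num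

variable (a b c d : R)

lemma kleinFourMatrix_mul_charTable :
    kleinFourMatrix a b c d * kleinFourCharTable R =
      kleinFourCharTable R * diagonal (kleinFourEigenvalues a b c d) := by
  ext i j
  fin_cases i <;> fin_cases j <;>
    simp [kleinFourMatrix, kleinFourCharTable, kleinFourEigenvalues, Matrix.mul_apply,
      Fin.sum_univ_four] <;> abel

lemma kleinFourCharTable_transpose_mul_matrix_mul :
    (kleinFourCharTable R)ᵀ * kleinFourMatrix a b c d * kleinFourCharTable R =
      diagonal fun i => 4 * kleinFourEigenvalues a b c d i := by
  rw [Matrix.mul_assoc, kleinFourMatrix_mul_charTable, ← Matrix.mul_assoc,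
    kleinFourCharTable_transpose_mul_self, diagonal_mul_diagonal]

variable (R) in
lemma kleinFourMatrix_two_neg_two_neg_five_neg_one_congr_diagonal :
    (kleinFourCharTable R)ᵀ * kleinFourMatrix 2 (-2) (-5) (-1) * kleinFourCharTable R =
      diagonal ![24, 32, -24, 0] := by
  rw [kleinFourCharTable_transpose_mul_matrix_mul]
  congr with i
  fin_cases i <;> norm_num [kleinFourEigenvalues]

end KleinFour

lemma isUnit_det_kleinFourCharTable {R : Type*} [CommRing R] (h : IsUnit (4 : R)) :
    IsUnit (kleinFourCharTable R).det := by
  have hdet : (kleinFourCharTable R).det * (kleinFourCharTable R).det = 4 ^ 4 := by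
    simpa using congrArg det (kleinFourCharTable_transpose_mul_self (R := R))
  exact isUnit_of_mul_isUnit_left (hdet ▸ h.pow 4)

/-- The matrix `A_{3,I}` from Nikulin's list of all twelve symmetric hyperbolic
generalized Cartan matrices of rank 3 with finite-volume fundamental chamber and
lattice Weyl vector of negative square:
(a) it is a symmetric generalized Cartan matrix;
(b) it has rank 3 over ℚ;
(c) the real quadratic form x ↦ xᵀAx is equivalent to the weighted sum of squares with
    weights (1,1,-1,0,…,0), i.e. A is hyperbolic of rank 3;
(d) it has a lattice Weyl vector of negative square: there is c ∈ ℚ^4 with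
    Ac = -(1,…,1)ᵀ and cᵀAc < 0. -/
theorem stmt_9 :
    let A : Matrix (Fin 4) (Fin 4) ℤ :=
      !![2, -2, -5, -1;
        -2, 2, -1, -5;
        -5, -1, 2, -2;
        -1, -5, -2, 2]
    -- (a) symmetric generalized Cartan matrix
    (Aᵀ = A ∧ (∀ i, A i i = 2) ∧ (∀ i j, i ≠ j → A i j ≤ 0)) ∧
    -- (b) rank 3 over ℚ
    (A.map ((↑·) : ℤ → ℚ)).rank = 3 ∧
    -- (c) hyperbolic of rank 3: x ↦ xᵀAx over ℝ is equivalent to the weighted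
    -- sum of squares with weights (1,1,-1,0,…,0)
    (∃ P : Matrix (Fin 4) (Fin 4) ℝ, IsUnit P.det ∧
      Pᵀ * A.map ((↑·) : ℤ → ℝ) * P = Matrix.diagonal ![(1:ℝ),1,-1,0]) ∧
    -- (d) lattice Weyl vector of negative square
    (∃ c : Fin 4 → ℚ, (∀ i, (A.map ((↑·) : ℤ → ℚ)).mulVec c i = -1) ∧
      c ⬝ᵥ (A.map ((↑·) : ℤ → ℚ)).mulVec c < 0) := by
  intro A
  have hA (R : Type) [Ring R] :
      A.map ((↑·) : ℤ → R) = kleinFourMatrix (2 : R) (-2) (-5) (-1) :=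
    (kleinFourMatrix_map ((↑·) : ℤ → R) 2 (-2) (-5) (-1)).trans (by norm_num)
  rw [hA ℚ, hA ℝ]
  refine ⟨⟨by decide, by decide, ?nonpos⟩, ?rank, ?signature, ?weyl⟩
  case nonpos =>
    exact fun i j => kleinFourMatrix_apply_le_of_ne (by norm_num) (by norm_num) (by norm_num)
  case rank =>
    rw [rank_eq_card_of_congr_diagonal (isUnit_det_kleinFourCharTable (by norm_num))
      (kleinFourMatrix_two_neg_two_neg_five_neg_one_congr_diagonal ℚ)]
    decide +kernel
  case signature =>
    obtain ⟨P, hP, hPA⟩ := exists_congr_diagonal_sign_of_congr_diagonal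
      (isUnit_det_kleinFourCharTable (by norm_num))
      (kleinFourMatrix_two_neg_two_neg_five_neg_one_congr_diagonal ℝ)
    refine ⟨P, hP, hPA.trans ?_⟩
    congr with i
    fin_cases i <;> norm_num
  case weyl =>
    exact exists_mulVec_eq_neg_one_and_dotProduct_neg (by norm_num)
      (kleinFourMatrix_mulVec_one _ _ _ _)
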